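/- arXiv:1204.2998 — 7 statements merged into one kernel-verified Lean document; each statement's English description precedes it below -/
import Mathlib

section
/- Fleming's quantum master inequality: for any two unit vectors v and w in a complex Hilbert space H and any bounded self-adjoint linear operator A on H, one has |⟨A⟩_w − ⟨A⟩_v| · |⟨w, v⟩| ≤ (Δ_v A + Δ_w A) · √(1 − |⟨w, v⟩|²). -/
open scoped InnerProductSpace

noncomputable def expVal {H : Type*} [NormedAddCommGroup H] [InnerProductSpace ℂ H]
    (A : H →L[ℂ] H) (v : H) : ℝ := (⟪v, A v⟫_ℂ).re

noncomputable def uncert {H : Type*} [NormedAddCommGroup H] [InnerProductSpace ℂ H]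
    (A : H →L[ℂ] H) (v : H) : ℝ :=
  Real.sqrt ((⟪v, A (A v)⟫_ℂ).re - (expVal A v) ^ 2)

theorem aux_exp {H : Type*} [NormedAddCommGroup H] [InnerProductSpace ℂ H]
    [CompleteSpace H] (v : H) (A : H →L[ℂ] H) (hA : IsSelfAdjoint A) :
    ⟪v, A v⟫_ℂ = (expVal A v : ℂ) := by
  have h : ⟪A v, v⟫_ℂ = ⟪v, A v⟫_ℂ := hA.isSymmetric v v
  have h2 : (starRingEnd ℂ) ⟪v, A v⟫_ℂ = ⟪v, A v⟫_ℂ := by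
    rw [inner_conj_symm]; exact h
  exact (Complex.conj_eq_iff_re.mp h2).symm

theorem aux_inner_self {H : Type*} [NormedAddCommGroup H] [InnerProductSpace ℂ H]
    (v : H) (hv : ‖v‖ = 1) : ⟪v, v⟫_ℂ = 1 := by
  rw [inner_self_eq_norm_sq_to_K, hv]; simp

theorem aux_unc {H : Type*} [NormedAddCommGroup H] [InnerProductSpace ℂ H]
    [CompleteSpace H] (v : H) (hv : ‖v‖ = 1) (A : H →L[ℂ] H) (hA : IsSelfAdjoint A) :
    ‖A v - (expVal A v : ℂ) • v‖ = uncert A v := by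
  have h1 := aux_exp v A hA
  have h2 : ⟪A v, v⟫_ℂ = (expVal A v : ℂ) := (hA.isSymmetric v v).trans h1
  have h3 : ⟪A v, A v⟫_ℂ = ⟪v, A (A v)⟫_ℂ := hA.isSymmetric v (A v)
  have h4 := aux_inner_self v hv
  unfold uncert
  rw [@norm_eq_sqrt_re_inner ℂ]
  congr 1
  have : ⟪A v - (expVal A v : ℂ) • v, A v - (expVal A v : ℂ) • v⟫_ℂ
      = ⟪v, A (A v)⟫_ℂ - ((expVal A v ^ 2 : ℝ) : ℂ) := by
    simp only [inner_sub_left, inner_sub_right, inner_smul_left, inner_smul_right, h1, h2, h3, h4,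
      Complex.conj_ofReal]
    push_cast
    ring
  rw [this]
  simp only [RCLike.re_eq_complex_re, Complex.sub_re, Complex.ofReal_re]

theorem aux_proj {H : Type*} [NormedAddCommGroup H] [InnerProductSpace ℂ H]
    (v w : H) (hv : ‖v‖ = 1) (hw : ‖w‖ = 1) :
    ‖w - ⟪v, w⟫_ℂ • v‖ = Real.sqrt (1 - ‖⟪w, v⟫_ℂ‖ ^ 2) := by
  rw [@norm_eq_sqrt_re_inner ℂ]
  congr 1
  have : ⟪w - ⟪v, w⟫_ℂ • v, w - ⟪v, w⟫_ℂ • v⟫_ℂ = ((1 - ‖⟪w, v⟫_ℂ‖ ^ 2 : ℝ) : ℂ) := by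
    have e : ⟪w, v⟫_ℂ * ⟪v, w⟫_ℂ = ((‖⟪w, v⟫_ℂ‖ : ℂ)) ^ 2 := by
      rw [← inner_conj_symm v w, Complex.mul_conj']
    simp only [inner_sub_left, inner_sub_right, inner_smul_left, inner_smul_right,
      aux_inner_self v hv, aux_inner_self w hw, inner_conj_symm]
    push_cast
    rw [← e]
    ring
  rw [this]
  simp only [RCLike.re_eq_complex_re, Complex.ofReal_re]

theorem aux_bound {H : Type*} [NormedAddCommGroup H] [InnerProductSpace ℂ H]
    [CompleteSpace H] (v w : H) (hv : ‖v‖ = 1) (hw : ‖w‖ = 1)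
    (A : H →L[ℂ] H) (hA : IsSelfAdjoint A) :
    ‖⟪w, A v - (expVal A v : ℂ) • v⟫_ℂ‖ ≤ uncert A v * Real.sqrt (1 - ‖⟪w, v⟫_ℂ‖ ^ 2) := by
  have h0 : ⟪v, A v - (expVal A v : ℂ) • v⟫_ℂ = 0 := by
    rw [inner_sub_right, inner_smul_right, aux_exp v A hA, aux_inner_self v hv]; ring
  have h1 : ⟪w, A v - (expVal A v : ℂ) • v⟫_ℂ
      = ⟪w - ⟪v, w⟫_ℂ • v, A v - (expVal A v : ℂ) • v⟫_ℂ := by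
    rw [inner_sub_left w, inner_smul_left, h0]; ring
  rw [h1, ← aux_unc v hv A hA, ← aux_proj v w hv hw, mul_comm]
  exact norm_inner_le_norm _ _

/-- Fleming's quantum master inequality. -/
theorem fleming_qmie {H : Type*} [NormedAddCommGroup H] [InnerProductSpace ℂ H]
    [CompleteSpace H] (v w : H) (hv : ‖v‖ = 1) (hw : ‖w‖ = 1)
    (A : H →L[ℂ] H) (hA : IsSelfAdjoint A) :
    |expVal A w - expVal A v| * ‖⟪w, v⟫_ℂ‖ ≤
      (uncert A v + uncert A w) * Real.sqrt (1 - ‖⟪w, v⟫_ℂ‖ ^ 2) := by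
  have b1 := aux_bound v w hv hw A hA
  have b2 := aux_bound w v hw hv A hA
  rw [norm_inner_symm v w] at b2
  rw [norm_inner_symm v] at b2
  have hs : ⟪A w, v⟫_ℂ = ⟪w, A v⟫_ℂ := hA.isSymmetric w v
  have key : ((expVal A w - expVal A v : ℝ) : ℂ) * ⟪w, v⟫_ℂ
      = ⟪w, A v - (expVal A v : ℂ) • v⟫_ℂ - ⟪A w - (expVal A w : ℂ) • w, v⟫_ℂ := by
    simp only [inner_sub_left, inner_sub_right, inner_smul_left, inner_smul_right, hs,
      Complex.conj_ofReal]
    push_cast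
    ring
  calc |expVal A w - expVal A v| * ‖⟪w, v⟫_ℂ‖
      = ‖((expVal A w - expVal A v : ℝ) : ℂ) * ⟪w, v⟫_ℂ‖ := by
        rw [norm_mul, Complex.norm_real, Real.norm_eq_abs]
    _ ≤ _ := by
        rw [key, add_mul]
        exact (norm_sub_le _ _).trans (add_le_add b1 b2)
end

section
/- For any two unit vectors v and w in a complex Hilbert space H with |⟨w, v⟩| = cos θ for θ ∈ [0, π/2], and any bounded self-adjoint operator A on H, setting v_A := A v − ⟨A⟩_v · v, one has |⟨w, v_A⟩| ≤ sin θ · Δ_v A. -/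
open scoped InnerProductSpace

/-- For unit vectors `v, w` with `|⟨w, v⟩| = cos θ`, `θ ∈ [0, π/2]`, and a bounded
self-adjoint operator `A`, one has `|⟨w, v_A⟩| ≤ sin θ · Δ_v A`, where
`v_A = A v − ⟨A⟩_v v`. -/
theorem inner_orth_component_le {H : Type*} [NormedAddCommGroup H]
    [InnerProductSpace ℂ H] [CompleteSpace H] (v w : H) (hv : ‖v‖ = 1) (hw : ‖w‖ = 1)
    (θ : ℝ) (hθ : θ ∈ Set.Icc 0 (Real.pi / 2)) (hcos : ‖⟪w, v⟫_ℂ‖ = Real.cos θ)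
    (A : H →L[ℂ] H) (hA : IsSelfAdjoint A) :
    ‖⟪w, A v - (expVal A v : ℂ) • v⟫_ℂ‖ ≤ Real.sin θ * uncert A v := by
  have hsym : ∀ x y : H, ⟪A x, y⟫_ℂ = ⟪x, A y⟫_ℂ := hA.isSymmetric
  have hvv : ⟪v, v⟫_ℂ = 1 := by rw [inner_self_eq_norm_sq_to_K, hv]; simp
  have he : ((expVal A v : ℝ) : ℂ) = ⟪v, A v⟫_ℂ := by
    unfold expVal
    apply Complex.conj_eq_iff_re.mp
    rw [inner_conj_symm, hsym]
  have he' : ((expVal A v : ℝ) : ℂ) = ⟪A v, v⟫_ℂ := by rw [he, hsym]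
  have hnu : ‖A v - (expVal A v : ℂ) • v‖ ^ 2
      = (⟪v, A (A v)⟫_ℂ).re - (expVal A v) ^ 2 := by
    have h : ((‖A v - (expVal A v : ℂ) • v‖ ^ 2 : ℝ) : ℂ)
        = ⟪v, A (A v)⟫_ℂ - ((expVal A v ^ 2 : ℝ) : ℂ) := by
      have h0 := inner_self_eq_norm_sq_to_K (𝕜 := ℂ) (A v - (expVal A v : ℂ) • v)
      push_cast
      refine h0.symm.trans ?_
      simp only [inner_sub_left, inner_sub_right, inner_smul_left, inner_smul_right, hvv,
        ← he, ← he', Complex.conj_ofReal, hsym v (A v)]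
      ring
    have h2 := congrArg Complex.re h
    rwa [Complex.sub_re, Complex.ofReal_re, Complex.ofReal_re] at h2
  have hu : uncert A v = ‖A v - (expVal A v : ℂ) • v‖ := by
    unfold uncert
    rw [← hnu, Real.sqrt_sq (norm_nonneg _)]
  have horth : ⟪v, A v - (expVal A v : ℂ) • v⟫_ℂ = 0 := by
    rw [inner_sub_right, inner_smul_right, hvv, ← he]; ring
  have hs : 0 ≤ Real.sin θ :=
    Real.sin_nonneg_of_nonneg_of_le_pi hθ.1 (by linarith [hθ.2, Real.pi_pos])
  have hww : ⟪w, w⟫_ℂ = 1 := by rw [inner_self_eq_norm_sq_to_K, hw]; simp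
  have hnw : ‖w - ⟪v, w⟫_ℂ • v‖ = Real.sin θ := by
    have h : ((‖w - ⟪v, w⟫_ℂ • v‖ ^ 2 : ℝ) : ℂ) = ((Real.sin θ ^ 2 : ℝ) : ℂ) := by
      have h0 := inner_self_eq_norm_sq_to_K (𝕜 := ℂ) (w - ⟪v, w⟫_ℂ • v)
      have h1 : ⟪w, v⟫_ℂ * ⟪v, w⟫_ℂ = ((Real.cos θ ^ 2 : ℝ) : ℂ) := by
        rw [← hcos, ← inner_conj_symm v w, Complex.mul_conj, Complex.normSq_eq_norm_sq]
      rw [Real.sin_sq, Complex.ofReal_sub, ← h1]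
      push_cast
      refine h0.symm.trans ?_
      simp only [inner_sub_left, inner_sub_right, inner_smul_left, inner_smul_right, hvv, hww,
        inner_conj_symm]
      ring
    exact (sq_eq_sq₀ (norm_nonneg _) hs).mp (Complex.ofReal_injective h)
  have hin : ⟪w, A v - (expVal A v : ℂ) • v⟫_ℂ
      = ⟪w - ⟪v, w⟫_ℂ • v, A v - (expVal A v : ℂ) • v⟫_ℂ := by
    rw [inner_sub_left w, inner_smul_left, horth]; ring
  rw [hin, hu, ← hnw]
  exact norm_inner_le_norm _ _
end

section
/- Saturation of Fleming's quantum master inequality (sufficiency): let v and w be linearly independent unit vectors in a complex Hilbert space H with |⟨w, v⟩| = cos θ for some θ ∈ (0, π/2], and let A be a bounded self-adjoint operator on H. If (i) A maps the subspace ℂ·v + ℂ·w into itself, and (ii) there exists a real number λ with min{⟨A⟩_v, ⟨A⟩_w} ≤ λ ≤ max{⟨A⟩_v, ⟨A⟩_w} such that ⟨w, A v⟩ = λ · ⟨w, v⟩, then |⟨A⟩_w − ⟨A⟩_v| · cos θ = (Δ_v A + Δ_w A) · sin θ. -/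
open scoped InnerProductSpace

open scoped InnerProductSpace ComplexConjugate

lemma qmie_aux {H : Type*} [NormedAddCommGroup H]
    [InnerProductSpace ℂ H] [CompleteSpace H] (v w : H) (hv : ‖v‖ = 1) (hw : ‖w‖ = 1)
    (c s l : ℝ) (hc : 0 ≤ c) (hs : 0 < s) (hcs : c ^ 2 + s ^ 2 = 1)
    (hp : ‖⟪w, v⟫_ℂ‖ = c) (A : H →L[ℂ] H) (hA : IsSelfAdjoint A)
    (hm : A v ∈ Submodule.span ℂ ({v, w} : Set H))
    (hl : ⟪w, A v⟫_ℂ = (l : ℂ) * ⟪w, v⟫_ℂ) :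
    uncert A v * s = |l - expVal A v| * c := by
  have hsym : ∀ x y : H, ⟪A x, y⟫_ℂ = ⟪x, A y⟫_ℂ := fun x y => hA.isSymmetric x y
  obtain ⟨α, β, hab⟩ := Submodule.mem_span_pair.1 hm
  have hvv : ⟪v, v⟫_ℂ = 1 := by simp [inner_self_eq_norm_sq_to_K, hv]
  have hww : ⟪w, w⟫_ℂ = 1 := by simp [inner_self_eq_norm_sq_to_K, hw]
  have ha : ⟪v, A v⟫_ℂ = (expVal A v : ℂ) := by
    have h1 : conj ⟪v, A v⟫_ℂ = ⟪v, A v⟫_ℂ := by rw [inner_conj_symm, hsym]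
    exact (Complex.conj_eq_iff_re.1 h1).symm
  set a := expVal A v with hadef
  set p := ⟪w, v⟫_ℂ with hpdef
  have hpc : ⟪v, w⟫_ℂ = conj p := by rw [hpdef, inner_conj_symm]
  have hpp : p * conj p = (c : ℂ) ^ 2 := by
    rw [Complex.mul_conj, Complex.normSq_eq_norm_sq, hp]; push_cast; ring
  have e1 : α + β * conj p = a := by
    rw [← ha, ← hab, inner_add_right, inner_smul_right, inner_smul_right, hvv, hpc, mul_one]
  have e2 : α * p + β = l * p := by
    rw [← hl, ← hab, inner_add_right, inner_smul_right, inner_smul_right, hww, mul_one]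
  have e3 : ⟪v, A (A v)⟫_ℂ = conj α * a + conj β * (l * p) := by
    rw [← hsym v (A v)]
    conv_lhs => rw [← hab]
    rw [inner_add_left, inner_smul_left, inner_smul_left, hab, ha, hl]
  have hcs' : (c : ℂ) ^ 2 + (s : ℂ) ^ 2 = 1 := by exact_mod_cast hcs
  have e1' : conj α + conj β * p = a := by simpa using congrArg conj e1
  have e2' : conj α * conj p + conj β = l * conj p := by simpa using congrArg conj e2
  have e4 : conj β * (s : ℂ) ^ 2 = (l - a) * conj p := by
    linear_combination e2' - conj p * e1' + conj β * hpp + conj β * hcs'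
  have e5 : (⟪v, A (A v)⟫_ℂ - (a : ℂ) ^ 2) * (s : ℂ) ^ 2 = ((l : ℂ) - a) ^ 2 * (c : ℂ) ^ 2 := by
    rw [e3]
    linear_combination (a : ℂ) * (s : ℂ) ^ 2 * e1' + (l - a) * p * e4 + ((l : ℂ) - a) ^ 2 * hpp
  have e6 : ((⟪v, A (A v)⟫_ℂ).re - a ^ 2) * s ^ 2 = (l - a) ^ 2 * c ^ 2 := by
    have := congrArg Complex.re e5
    have h2 : (((l : ℂ) - a) ^ 2 * (c : ℂ) ^ 2) = (((l - a) ^ 2 * c ^ 2 : ℝ) : ℂ) := by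
      push_cast; ring
    rw [h2, Complex.ofReal_re, ← Complex.ofReal_pow, ← Complex.ofReal_pow,
      Complex.re_mul_ofReal, Complex.sub_re, Complex.ofReal_re] at this
    exact this
  unfold uncert
  rw [← hadef]
  calc _ = Real.sqrt (((⟪v, A (A v)⟫_ℂ).re - a ^ 2) * s ^ 2) := by
        rw [Real.sqrt_mul' _ (sq_nonneg s), Real.sqrt_sq hs.le]
    _ = _ := by
        rw [e6, Real.sqrt_mul (sq_nonneg _), Real.sqrt_sq hc, Real.sqrt_sq_eq_abs]

/-- Saturation of Fleming's quantum master inequality: sufficiency of the two conditions. -/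
theorem qmie_saturation_sufficient {H : Type*} [NormedAddCommGroup H]
    [InnerProductSpace ℂ H] [CompleteSpace H] (v w : H) (hv : ‖v‖ = 1) (hw : ‖w‖ = 1)
    (hli : LinearIndependent ℂ ![v, w])
    (θ : ℝ) (hθ : 0 < θ ∧ θ ≤ Real.pi / 2) (hcos : ‖⟪w, v⟫_ℂ‖ = Real.cos θ)
    (A : H →L[ℂ] H) (hA : IsSelfAdjoint A)
    (hstab : ∀ x ∈ Submodule.span ℂ ({v, w} : Set H),
      A x ∈ Submodule.span ℂ ({v, w} : Set H))
    (hl : ∃ l : ℝ, min (expVal A v) (expVal A w) ≤ l ∧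
      l ≤ max (expVal A v) (expVal A w) ∧ ⟪w, A v⟫_ℂ = (l : ℂ) * ⟪w, v⟫_ℂ) :
    |expVal A w - expVal A v| * Real.cos θ =
      (uncert A v + uncert A w) * Real.sin θ := by
  obtain ⟨l, h1, h2, h3⟩ := hl
  have hs : 0 < Real.sin θ := Real.sin_pos_of_pos_of_lt_pi hθ.1 (by linarith [Real.pi_pos])
  have hc : 0 ≤ Real.cos θ := hcos ▸ norm_nonneg _
  have hcs : Real.cos θ ^ 2 + Real.sin θ ^ 2 = 1 := Real.cos_sq_add_sin_sq θ
  have hv' := qmie_aux v w hv hw _ _ l hc hs hcs hcos A hA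
    (hstab v (Submodule.subset_span (by simp))) h3
  have hw' := qmie_aux w v hw hv _ _ l hc hs hcs (by rw [norm_inner_symm, hcos]) A hA
    (by rw [Set.pair_comm]; exact hstab w (Submodule.subset_span (by simp)))
    (by
      have h4 : ⟪v, A w⟫_ℂ = ⟪A v, w⟫_ℂ := (hA.isSymmetric v w).symm
      rw [h4, ← inner_conj_symm, h3, map_mul, inner_conj_symm, Complex.conj_ofReal])
  rw [add_mul, hv', hw', ← add_mul]
  congr 1
  rcases le_total (expVal A v) (expVal A w) with h | h
  · rw [min_eq_left h] at h1
    rw [max_eq_right h] at h2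
    rw [abs_of_nonneg (by linarith), abs_of_nonneg (by linarith), abs_of_nonpos (by linarith)]
    ring
  · rw [min_eq_right h] at h1
    rw [max_eq_left h] at h2
    rw [abs_of_nonpos (by linarith), abs_of_nonpos (by linarith), abs_of_nonneg (by linarith)]
    ring
end

section
/- Uncertainties of the parametrized saturating operator: with v, w, θ, e₁, e₂ and A₀ as in the parametrized construction (A₀ = cos α (e₁⟨e₁,·⟩ − e₂⟨e₂,·⟩) + sin α (e₁⟨e₂,·⟩ + e₂⟨e₁,·⟩) on span{e₁,e₂}, zero on the orthogonal complement), one has (Δ_v A₀)² = sin²(θ+α) and (Δ_w A₀)² = sin²(θ−α). -/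
open scoped InnerProductSpace

/-- The rank-one operator `z ↦ ⟨y, z⟩ x`. -/
noncomputable def rankOne {H : Type*} [NormedAddCommGroup H] [InnerProductSpace ℂ H]
    (x y : H) : H →L[ℂ] H := (innerSL ℂ y).smulRight x

theorem uncert_aux {H : Type*} [NormedAddCommGroup H] [InnerProductSpace ℂ H]
    (e₁ e₂ : H) (h11 : ⟪e₁, e₁⟫_ℂ = 1) (h22 : ⟪e₂, e₂⟫_ℂ = 1) (h12 : ⟪e₁, e₂⟫_ℂ = 0)
    (h21 : ⟪e₂, e₁⟫_ℂ = 0) (α φ : ℝ) (x : H)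
    (hx : x = ((Real.cos φ : ℝ) : ℂ) • e₁ + ((Real.sin φ : ℝ) : ℂ) • e₂) :
    (uncert (((Real.cos α : ℝ) : ℂ) • (rankOne e₁ e₁ - rankOne e₂ e₂) +
      ((Real.sin α : ℝ) : ℂ) • (rankOne e₁ e₂ + rankOne e₂ e₁)) x) ^ 2
      = Real.sin (2 * φ - α) ^ 2 := by
  set A := ((Real.cos α : ℝ) : ℂ) • (rankOne e₁ e₁ - rankOne e₂ e₂) +
      ((Real.sin α : ℝ) : ℂ) • (rankOne e₁ e₂ + rankOne e₂ e₁) with hA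
  have key : ∀ p q : ℝ, A ((p : ℂ) • e₁ + (q : ℂ) • e₂) =
      ((Real.cos α * p + Real.sin α * q : ℝ) : ℂ) • e₁ +
      ((Real.sin α * p - Real.cos α * q : ℝ) : ℂ) • e₂ := by
    intro p q
    simp only [hA, rankOne, add_apply, sub_apply,
      smul_apply, ContinuousLinearMap.smulRight_apply, innerSL_apply_apply,
      inner_add_right, inner_smul_right, h11, h22, h12, h21]
    push_cast
    module
  have ip : ∀ p q r s : ℝ, (⟪(p : ℂ) • e₁ + (q : ℂ) • e₂, (r : ℂ) • e₁ + (s : ℂ) • e₂⟫_ℂ).re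
      = p * r + q * s := by
    intro p q r s
    have h : ⟪(p : ℂ) • e₁ + (q : ℂ) • e₂, (r : ℂ) • e₁ + (s : ℂ) • e₂⟫_ℂ
        = ((p * r + q * s : ℝ) : ℂ) := by
      simp only [inner_add_right, inner_add_left, inner_smul_right, inner_smul_left, h11, h22,
        h12, h21, Complex.conj_ofReal]
      push_cast
      ring
    rw [h, Complex.ofReal_re]
  have hα := Real.sin_sq_add_cos_sq α
  have hφ := Real.sin_sq_add_cos_sq φ
  have hs := Real.sin_sq_add_cos_sq (2 * φ - α)
  have hE : expVal A x = Real.cos (2 * φ - α) := by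
    rw [expVal, hx, key, ip, Real.cos_sub, Real.cos_two_mul, Real.sin_two_mul]
    linear_combination (-Real.cos α) * hφ
  have h2 : (⟪x, A (A x)⟫_ℂ).re = 1 := by
    rw [hx, key, key, ip]
    linear_combination (Real.cos φ ^ 2 + Real.sin φ ^ 2) * hα + hφ
  rw [uncert, hE, h2, Real.sq_sqrt] <;> nlinarith [sq_nonneg (Real.sin (2 * φ - α))]

/-- Uncertainties of the parametrized saturating operator `A₀`. -/
theorem uncert_saturating_operator {H : Type*} [NormedAddCommGroup H]
    [InnerProductSpace ℂ H] [CompleteSpace H] (v w : H) (hv : ‖v‖ = 1) (hw : ‖w‖ = 1)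
    (θ : ℝ) (hθ : θ ∈ Set.Ioo 0 (Real.pi / 2)) (hcos : ⟪v, w⟫_ℂ = (Real.cos θ : ℂ))
    (α : ℝ) (e₁ e₂ : H)
    (he₁ : e₁ = ((2 * Real.cos (θ / 2) : ℝ) : ℂ)⁻¹ • (v + w))
    (he₂ : e₂ = ((2 * Real.sin (θ / 2) : ℝ) : ℂ)⁻¹ • (w - v))
    (A₀ : H →L[ℂ] H)
    (hA₀ : A₀ = ((Real.cos α : ℝ) : ℂ) • (rankOne e₁ e₁ - rankOne e₂ e₂) +
      ((Real.sin α : ℝ) : ℂ) • (rankOne e₁ e₂ + rankOne e₂ e₁)) :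
    (uncert A₀ v) ^ 2 = Real.sin (θ + α) ^ 2 ∧
      (uncert A₀ w) ^ 2 = Real.sin (θ - α) ^ 2 := by
  have hc : 0 < Real.cos (θ / 2) :=
    Real.cos_pos_of_mem_Ioo ⟨by linarith [hθ.1, Real.pi_pos], by linarith [hθ.2, Real.pi_pos]⟩
  have hs : 0 < Real.sin (θ / 2) :=
    Real.sin_pos_of_pos_of_lt_pi (by linarith [hθ.1]) (by linarith [hθ.2, Real.pi_pos])
  have hsc := Real.sin_sq_add_cos_sq (θ / 2)
  have hct : Real.cos θ = 2 * Real.cos (θ / 2) ^ 2 - 1 := by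
    rw [← Real.cos_two_mul]; congr 1; ring
  generalize hc' : Real.cos (θ / 2) = c at *
  generalize hs' : Real.sin (θ / 2) = s at *
  have hcC : (c : ℂ) ≠ 0 := by exact_mod_cast hc.ne'
  have hsC : (s : ℂ) ≠ 0 := by exact_mod_cast hs.ne'
  have hscC : (s : ℂ) ^ 2 + (c : ℂ) ^ 2 = 1 := by exact_mod_cast hsc
  have hvv : ⟪v, v⟫_ℂ = 1 := by simp [inner_self_eq_norm_sq_to_K, hv]
  have hww : ⟪w, w⟫_ℂ = 1 := by simp [inner_self_eq_norm_sq_to_K, hw]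
  have hvw : ⟪v, w⟫_ℂ = 2 * (c : ℂ) ^ 2 - 1 := by rw [hcos, hct]; push_cast; ring
  have hwv : ⟪w, v⟫_ℂ = 2 * (c : ℂ) ^ 2 - 1 := by
    rw [← inner_conj_symm, hcos, Complex.conj_ofReal, hct]; push_cast; ring
  have h11 : ⟪e₁, e₁⟫_ℂ = 1 := by
    simp only [he₁, inner_smul_left, inner_smul_right, inner_add_left, inner_add_right, hvv, hww,
      hvw, hwv, map_inv₀, Complex.conj_ofReal]
    push_cast
    field_simp
    ring
  have h22 : ⟪e₂, e₂⟫_ℂ = 1 := by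
    simp only [he₂, inner_smul_left, inner_smul_right, inner_sub_left, inner_sub_right, hvv, hww,
      hvw, hwv, map_inv₀, Complex.conj_ofReal]
    push_cast
    field_simp
    linear_combination (-4) * hscC
  have h12 : ⟪e₁, e₂⟫_ℂ = 0 := by
    simp only [he₁, he₂, inner_smul_left, inner_smul_right, inner_sub_right, inner_add_left,
      hvv, hww, hvw, hwv]
    ring
  have h21 : ⟪e₂, e₁⟫_ℂ = 0 := by rw [← inner_conj_symm, h12]; simp
  have hce : (c : ℂ) • e₁ = (2 : ℂ)⁻¹ • (v + w) := by
    rw [he₁, smul_smul]; congr 1; push_cast; field_simp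
  have hse : (s : ℂ) • e₂ = (2 : ℂ)⁻¹ • (w - v) := by
    rw [he₂, smul_smul]; congr 1; push_cast; field_simp
  rw [hA₀]
  constructor
  · rw [uncert_aux e₁ e₂ h11 h22 h12 h21 α (-(θ / 2)) v]
    · rw [show 2 * -(θ / 2) - α = -(θ + α) by ring, Real.sin_neg, neg_sq]
    · rw [Real.cos_neg, Real.sin_neg, hc', hs', Complex.ofReal_neg, neg_smul, hce, hse]
      module
  · rw [uncert_aux e₁ e₂ h11 h22 h12 h21 α (θ / 2) w]
    · rw [show 2 * (θ / 2) - α = θ - α by ring]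
    · rw [hc', hs', hce, hse]
      module
end

section
/- Fleming's bound is attained by each member of the parametrized family: let v and w be unit vectors in a complex Hilbert space H with ⟨v, w⟩ = cos θ for some θ ∈ (0, π/2), let α ∈ [θ, π−θ], and let A₀ = cos α (e₁⟨e₁,·⟩ − e₂⟨e₂,·⟩) + sin α (e₁⟨e₂,·⟩ + e₂⟨e₁,·⟩) on span{e₁,e₂} (zero on the orthogonal complement), where e₁ = (v+w)/(2 cos(θ/2)) and e₂ = (w−v)/(2 sin(θ/2)). Then ⟨A₀⟩_w − ⟨A₀⟩_v = 2 sin θ sin α, Δ_v A₀ + Δ_w A₀ = 2 sin α cos θ > 0, and δ_{A₀} = tan θ. -/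
open scoped InnerProductSpace

noncomputable def discern {H : Type*} [NormedAddCommGroup H] [InnerProductSpace ℂ H]
    (A : H →L[ℂ] H) (v w : H) : ℝ :=
  |expVal A w - expVal A v| / (uncert A v + uncert A w)

lemma aux_A {H : Type*} [NormedAddCommGroup H] [InnerProductSpace ℂ H] (e₁ e₂ : H)
    (h11 : ⟪e₁, e₁⟫_ℂ = 1) (h22 : ⟪e₂, e₂⟫_ℂ = 1) (h12 : ⟪e₁, e₂⟫_ℂ = 0)
    (h21 : ⟪e₂, e₁⟫_ℂ = 0) (c s : ℝ) (A : H →L[ℂ] H)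
    (hA : A = (c : ℂ) • (rankOne e₁ e₁ - rankOne e₂ e₂) +
      (s : ℂ) • (rankOne e₁ e₂ + rankOne e₂ e₁)) (hcs : c ^ 2 + s ^ 2 = 1)
    (a b : ℝ) (hab : a ^ 2 + b ^ 2 = 1) (x : H) (hx : x = (a : ℂ) • e₁ + (b : ℂ) • e₂) :
    expVal A x = c * (a ^ 2 - b ^ 2) + 2 * a * b * s ∧
    uncert A x = Real.sqrt (1 - (c * (a ^ 2 - b ^ 2) + 2 * a * b * s) ^ 2) := by
  have key : ∀ p q : ℝ, A ((p : ℂ) • e₁ + (q : ℂ) • e₂) =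
      ((c * p + s * q : ℝ) : ℂ) • e₁ + ((s * p - c * q : ℝ) : ℂ) • e₂ := by
    intro p q
    subst hA
    simp only [rankOne, ContinuousLinearMap.add_apply, ContinuousLinearMap.sub_apply,
      ContinuousLinearMap.smul_apply, ContinuousLinearMap.smulRight_apply, innerSL_apply_apply,
      inner_add_right, inner_smul_right, h11, h22, h12, h21]
    push_cast
    module
  have inn : ∀ p q : ℝ, (⟪x, (p : ℂ) • e₁ + (q : ℂ) • e₂⟫_ℂ).re = a * p + b * q := by
    intro p q
    subst hx
    simp only [inner_add_right, inner_add_left, inner_smul_right, inner_smul_left, h11, h22, h12,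
      h21, Complex.conj_ofReal]
    simp
    ring
  have hAx := key a b
  have hAAx := key (c * a + s * b) (s * a - c * b)
  rw [← hAx, ← hx] at hAAx
  rw [← hx] at hAx
  have h1 : expVal A x = c * (a ^ 2 - b ^ 2) + 2 * a * b * s := by
    rw [expVal, hAx, inn]; ring
  refine ⟨h1, ?_⟩
  rw [uncert, h1, hAAx, inn]
  congr 2
  linear_combination (a ^ 2 + b ^ 2) * hcs + hab

/-- Each member of the parametrized family attains Fleming's bound `tan θ`. -/
theorem saturating_family_attains_bound {H : Type*} [NormedAddCommGroup H]
    [InnerProductSpace ℂ H] [CompleteSpace H] (v w : H) (hv : ‖v‖ = 1) (hw : ‖w‖ = 1)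
    (θ : ℝ) (hθ : θ ∈ Set.Ioo 0 (Real.pi / 2)) (hcos : ⟪v, w⟫_ℂ = (Real.cos θ : ℂ))
    (α : ℝ) (hα : α ∈ Set.Icc θ (Real.pi - θ)) (e₁ e₂ : H)
    (he₁ : e₁ = ((2 * Real.cos (θ / 2) : ℝ) : ℂ)⁻¹ • (v + w))
    (he₂ : e₂ = ((2 * Real.sin (θ / 2) : ℝ) : ℂ)⁻¹ • (w - v))
    (A₀ : H →L[ℂ] H)
    (hA₀ : A₀ = ((Real.cos α : ℝ) : ℂ) • (rankOne e₁ e₁ - rankOne e₂ e₂) +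
      ((Real.sin α : ℝ) : ℂ) • (rankOne e₁ e₂ + rankOne e₂ e₁)) :
    expVal A₀ w - expVal A₀ v = 2 * Real.sin θ * Real.sin α ∧
      uncert A₀ v + uncert A₀ w = 2 * Real.sin α * Real.cos θ ∧
      0 < uncert A₀ v + uncert A₀ w ∧
      discern A₀ v w = Real.tan θ := by
  obtain ⟨h0, h1⟩ := hθ
  obtain ⟨ha, hb⟩ := hα
  have hC : 0 < Real.cos (θ / 2) := Real.cos_pos_of_mem_Ioo ⟨by linarith, by linarith⟩
  have hS : 0 < Real.sin (θ / 2) := Real.sin_pos_of_pos_of_lt_pi (by linarith) (by linarith)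
  have hct : 0 < Real.cos θ := Real.cos_pos_of_mem_Ioo ⟨by linarith, by linarith⟩
  have hst : 0 < Real.sin θ := Real.sin_pos_of_pos_of_lt_pi (by linarith) (by linarith)
  have hsa : 0 < Real.sin α := Real.sin_pos_of_pos_of_lt_pi (by linarith) (by linarith)
  have hcs := Real.cos_sq_add_sin_sq (θ / 2)
  have hcθ : Real.cos θ = Real.cos (θ / 2) ^ 2 - Real.sin (θ / 2) ^ 2 := by
    rw [← Real.cos_two_mul']; congr 1; ring
  have hsθ : Real.sin θ = 2 * Real.sin (θ / 2) * Real.cos (θ / 2) := by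
    rw [← Real.sin_two_mul]; congr 1; ring
  have hE1 := Real.sin_sub α θ
  have hE2 := Real.sin_add α θ
  have hE3 := Real.sin_sq_add_cos_sq (α - θ)
  have hE4 := Real.sin_sq_add_cos_sq (α + θ)
  have hE5 := Real.cos_sub α θ
  have hE6 := Real.cos_add α θ
  have hn1 : 0 ≤ Real.sin (α - θ) := Real.sin_nonneg_of_nonneg_of_le_pi (by linarith) (by linarith)
  have hn2 : 0 ≤ Real.sin (α + θ) := Real.sin_nonneg_of_nonneg_of_le_pi (by linarith) (by linarith)
  have hcsα := Real.cos_sq_add_sin_sq α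
  have hvv : ⟪v, v⟫_ℂ = 1 := by simp [inner_self_eq_norm_sq_to_K, hv]
  have hww : ⟪w, w⟫_ℂ = 1 := by simp [inner_self_eq_norm_sq_to_K, hw]
  have hwv : ⟪w, v⟫_ℂ = (Real.cos θ : ℂ) := by
    rw [← inner_conj_symm, hcos, Complex.conj_ofReal]
  rw [hcθ] at hcos hwv
  generalize Real.cos (θ / 2) = C at *
  generalize Real.sin (θ / 2) = S at *
  have hC' : (C : ℂ) ≠ 0 := by exact_mod_cast hC.ne'
  have hS' : (S : ℂ) ≠ 0 := by exact_mod_cast hS.ne'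
  have hcs' : (C : ℂ) ^ 2 + (S : ℂ) ^ 2 = 1 := by exact_mod_cast hcs
  push_cast at hcos hwv
  have h11 : ⟪e₁, e₁⟫_ℂ = 1 := by
    rw [he₁]
    simp only [inner_add_right, inner_add_left, inner_smul_right, inner_smul_left, hvv, hww, hcos,
      hwv, map_inv₀, Complex.conj_ofReal]
    push_cast
    field_simp
    linear_combination -2 * hcs'
  have h22 : ⟪e₂, e₂⟫_ℂ = 1 := by
    rw [he₂]
    simp only [inner_sub_right, inner_sub_left, inner_smul_right, inner_smul_left, hvv, hww, hcos,
      hwv, map_inv₀, Complex.conj_ofReal]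
    push_cast
    field_simp
    linear_combination -2 * hcs'
  have h12 : ⟪e₁, e₂⟫_ℂ = 0 := by
    rw [he₁, he₂]
    simp only [inner_sub_right, inner_add_left, inner_smul_right, inner_smul_left, hvv, hww, hcos,
      hwv]
    ring
  have h21 : ⟪e₂, e₁⟫_ℂ = 0 := by
    rw [← inner_conj_symm, h12, map_zero]
  have hve : v = (C : ℂ) • e₁ + ((-S : ℝ) : ℂ) • e₂ := by
    rw [he₁, he₂]
    push_cast
    match_scalars <;> field_simp <;> ring
  have hwe : w = (C : ℂ) • e₁ + (S : ℂ) • e₂ := by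
    rw [he₁, he₂]
    push_cast
    match_scalars <;> field_simp <;> ring
  obtain ⟨v1, v2⟩ := aux_A e₁ e₂ h11 h22 h12 h21 _ _ A₀ hA₀ hcsα C (-S) (by linarith [neg_sq S]) v hve
  obtain ⟨w1, w2⟩ := aux_A e₁ e₂ h11 h22 h12 h21 _ _ A₀ hA₀ hcsα C S hcs w hwe
  have v3 : Real.cos α * (C ^ 2 - (-S) ^ 2) + 2 * C * (-S) * Real.sin α = Real.cos (α + θ) := by
    rw [hE6, hcθ, hsθ]; ring
  have w3 : Real.cos α * (C ^ 2 - S ^ 2) + 2 * C * S * Real.sin α = Real.cos (α - θ) := by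
    rw [hE5, hcθ, hsθ]; ring
  rw [v3] at v1 v2
  rw [w3] at w1 w2
  rw [show 1 - Real.cos (α + θ) ^ 2 = Real.sin (α + θ) ^ 2 by linarith, Real.sqrt_sq hn2] at v2
  rw [show 1 - Real.cos (α - θ) ^ 2 = Real.sin (α - θ) ^ 2 by linarith, Real.sqrt_sq hn1] at w2
  have r1 : expVal A₀ w - expVal A₀ v = 2 * Real.sin θ * Real.sin α := by
    rw [v1, w1, hE5, hE6]; ring
  have r2 : uncert A₀ v + uncert A₀ w = 2 * Real.sin α * Real.cos θ := by
    rw [v2, w2, hE1, hE2]; ring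
  refine ⟨r1, r2, by rw [r2]; positivity, ?_⟩
  rw [discern, r1, r2, abs_of_pos (by positivity), Real.tan_eq_sin_div_cos]
  field_simp
end

section
/- The operator A = (w⟨w,·⟩ − v⟨v,·⟩)/sin θ attains Fleming's bound and maximizes the expectation difference: for unit vectors v, w in a complex Hilbert space H with ⟨v, w⟩ = cos θ, θ ∈ (0, π/2), this bounded self-adjoint operator satisfies ⟨A⟩_w − ⟨A⟩_v = 2 sin θ and δ_A = tan θ. -/
open scoped InnerProductSpace

/-- The operator `A = (w⟨w,·⟩ − v⟨v,·⟩)/sin θ` attains Fleming's bound and maximizes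
the expectation difference. -/
theorem projection_difference_attains_bound {H : Type*} [NormedAddCommGroup H]
    [InnerProductSpace ℂ H] [CompleteSpace H] (v w : H) (hv : ‖v‖ = 1) (hw : ‖w‖ = 1)
    (θ : ℝ) (hθ : θ ∈ Set.Ioo 0 (Real.pi / 2)) (hcos : ⟪v, w⟫_ℂ = (Real.cos θ : ℂ))
    (A : H →L[ℂ] H)
    (hA : A = ((Real.sin θ : ℝ) : ℂ)⁻¹ • (rankOne w w - rankOne v v)) :
    expVal A w - expVal A v = 2 * Real.sin θ ∧ discern A v w = Real.tan θ := by
  obtain ⟨h0, h1⟩ := hθ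
  have hs : 0 < Real.sin θ := Real.sin_pos_of_pos_of_lt_pi h0 (by linarith [Real.pi_pos])
  have hc : 0 < Real.cos θ := Real.cos_pos_of_mem_Ioo ⟨by linarith, h1⟩
  have hsc := Real.sin_sq_add_cos_sq θ
  rw [Real.tan_eq_sin_div_cos]
  generalize Real.sin θ = s at *
  generalize Real.cos θ = c at *
  have hvv : ⟪v, v⟫_ℂ = 1 := by rw [inner_self_eq_norm_sq_to_K, hv]; simp
  have hww : ⟪w, w⟫_ℂ = 1 := by rw [inner_self_eq_norm_sq_to_K, hw]; simp
  have hwv : ⟪w, v⟫_ℂ = (c : ℂ) := by rw [← inner_conj_symm, hcos]; simp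
  have hs' : (s : ℂ) ≠ 0 := by exact_mod_cast hs.ne'
  have hscC : (s : ℂ) ^ 2 + (c : ℂ) ^ 2 = 1 := by exact_mod_cast hsc
  have hAw : A w = (s : ℂ)⁻¹ • (w - (c : ℂ) • v) := by
    rw [hA]; simp [rankOne, hww, hcos, hw]
  have hAv : A v = (s : ℂ)⁻¹ • ((c : ℂ) • w - v) := by
    rw [hA]; simp [rankOne, hvv, hwv, hv]
  have hAAw : A (A w) = w := by
    rw [hAw, map_smul, map_sub, map_smul, hAw, hAv]
    match_scalars <;> field_simp <;> first | ring1 | linear_combination -hscC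
  have hAAv : A (A v) = v := by
    rw [hAv, map_smul, map_sub, map_smul, hAw, hAv]
    match_scalars <;> field_simp <;> first | ring1 | linear_combination -hscC
  have ew : expVal A w = s := by
    have : ⟪w, A w⟫_ℂ = (s : ℂ) := by
      rw [hAw, inner_smul_right, inner_sub_right, inner_smul_right, hww, hwv]
      field_simp; linear_combination -hscC
    rw [expVal, this, Complex.ofReal_re]
  have ev : expVal A v = -s := by
    have : ⟪v, A v⟫_ℂ = ((-s : ℝ) : ℂ) := by
      rw [hAv, inner_smul_right, inner_sub_right, inner_smul_right, hvv, hcos]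
      push_cast
      field_simp; linear_combination hscC
    rw [expVal, this, Complex.ofReal_re]
  have uw : uncert A w = c := by
    rw [uncert, hAAw, hww, ew, Complex.one_re, show 1 - s ^ 2 = c ^ 2 by linarith,
      Real.sqrt_sq hc.le]
  have uv : uncert A v = c := by
    rw [uncert, hAAv, hvv, ev, Complex.one_re, show 1 - (-s) ^ 2 = c ^ 2 by linarith,
      Real.sqrt_sq hc.le]
  refine ⟨by rw [ew, ev]; ring, ?_⟩
  rw [discern, ew, ev, uw, uv, abs_of_pos (by linarith)]
  field_simp; ring
end

section
/- Maximum discernability equals tan θ: for unit vectors v, w in a complex Hilbert space H with ⟨v, w⟩ = cos θ for some θ ∈ (0, π/2), the supremum of δ_A over all bounded self-adjoint operators A on H with Δ_v A + Δ_w A > 0 equals tan θ, and this supremum is attained (e.g. by A = (w⟨w,·⟩ − v⟨v,·⟩)/sin θ). -/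
open scoped InnerProductSpace

theorem aux_real {H : Type*} [NormedAddCommGroup H] [InnerProductSpace ℂ H] [CompleteSpace H]
    (A : H →L[ℂ] H) (hA : IsSelfAdjoint A) (v : H) :
    ⟪v, A v⟫_ℂ = (expVal A v : ℂ) := by
  have hs := (ContinuousLinearMap.isSelfAdjoint_iff_isSymmetric.mp hA)
  apply Complex.ext
  · simp [expVal]
  · have h1 : ⟪A v, v⟫_ℂ = ⟪v, A v⟫_ℂ := hs v v
    have h2 : (starRingEnd ℂ) ⟪v, A v⟫_ℂ = ⟪A v, v⟫_ℂ := inner_conj_symm _ _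
    rw [h1] at h2
    simpa using Complex.conj_eq_iff_im.mp h2

theorem aux_uncert {H : Type*} [NormedAddCommGroup H] [InnerProductSpace ℂ H] [CompleteSpace H]
    (A : H →L[ℂ] H) (hA : IsSelfAdjoint A) (v : H) (hv : ‖v‖ = 1) :
    uncert A v = ‖A v - (expVal A v : ℂ) • v‖ := by
  have hs := (ContinuousLinearMap.isSelfAdjoint_iff_isSymmetric.mp hA)
  have h1 : ⟪A v, v⟫_ℂ = ⟪v, A v⟫_ℂ := hs v v
  have h3 : ⟪v, A (A v)⟫_ℂ = ⟪A v, A v⟫_ℂ := (hs v (A v)).symm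
  have h4 : (⟪A v, A v⟫_ℂ).re = ‖A v‖ ^ 2 := inner_self_eq_norm_sq (𝕜 := ℂ) (A v)
  unfold uncert
  rw [← Real.sqrt_sq (norm_nonneg (A v - (expVal A v : ℂ) • v))]
  congr 1
  rw [@norm_sub_sq ℂ, inner_smul_right, h1, h3, aux_real A hA v, norm_smul, hv,
    ← Complex.ofReal_mul, h4]
  simp only [RCLike.re_to_complex, Complex.ofReal_re, Complex.norm_real, mul_one, Real.norm_eq_abs,
    sq_abs]
  ring

theorem aux_bound_s14 {H : Type*} [NormedAddCommGroup H] [InnerProductSpace ℂ H]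
    (v w x : H) (hv : ‖v‖ = 1) (hw : ‖w‖ = 1) (θ : ℝ) (hs : 0 < Real.sin θ)
    (hcos : ⟪v, w⟫_ℂ = (Real.cos θ : ℂ)) (hx : ⟪w, x⟫_ℂ = 0) :
    ‖⟪v, x⟫_ℂ‖ ≤ Real.sin θ * ‖x‖ := by
  have h1 : ⟪v, x⟫_ℂ = ⟪v - (Real.cos θ : ℂ) • w, x⟫_ℂ := by
    rw [inner_sub_left, inner_smul_left, hx]; simp
  have h2 : ‖v - (Real.cos θ : ℂ) • w‖ = Real.sin θ := by
    rw [← sq_eq_sq₀ (norm_nonneg _) hs.le, @norm_sub_sq ℂ, inner_smul_right, hcos, norm_smul, hv, hw,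
      Real.sin_sq, ← Complex.ofReal_mul]
    simp only [RCLike.re_to_complex, Complex.ofReal_re, Complex.norm_real, mul_one, Real.norm_eq_abs, sq_abs]
    ring
  rw [h1, ← h2]
  exact norm_inner_le_norm _ _

/-- The maximum discernability over all bounded self-adjoint operators with
`Δ_v A + Δ_w A > 0` equals `tan θ`, and it is attained. -/
theorem max_discern_eq_tan {H : Type*} [NormedAddCommGroup H]
    [InnerProductSpace ℂ H] [CompleteSpace H] (v w : H) (hv : ‖v‖ = 1) (hw : ‖w‖ = 1)
    (θ : ℝ) (hθ : θ ∈ Set.Ioo 0 (Real.pi / 2)) (hcos : ⟪v, w⟫_ℂ = (Real.cos θ : ℂ)) :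
    IsGreatest {x : ℝ | ∃ A : H →L[ℂ] H, IsSelfAdjoint A ∧
      0 < uncert A v + uncert A w ∧ x = discern A v w} (Real.tan θ) := by
  obtain ⟨h0, h1⟩ := hθ
  have hs : 0 < Real.sin θ := Real.sin_pos_of_pos_of_lt_pi h0 (by linarith [Real.pi_pos])
  have hc : 0 < Real.cos θ := Real.cos_pos_of_mem_Ioo ⟨by linarith, h1⟩
  have hcos' : ⟪w, v⟫_ℂ = (Real.cos θ : ℂ) := by
    rw [← inner_conj_symm, hcos, Complex.conj_ofReal]
  have hvv : ⟪v, v⟫_ℂ = 1 := by rw [inner_self_eq_norm_sq_to_K, hv]; simp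
  have hww : ⟪w, w⟫_ℂ = 1 := by rw [inner_self_eq_norm_sq_to_K, hw]; simp
  constructor
  · let A : H →L[ℂ] H := (innerSL ℂ w).smulRight w - (innerSL ℂ v).smulRight v
    have hA : ∀ x, A x = ⟪w, x⟫_ℂ • w - ⟪v, x⟫_ℂ • v := fun x => by simp [A]
    have hAv : A v = (Real.cos θ : ℂ) • w - v := by rw [hA, hcos', hvv, one_smul]
    have hAw : A w = w - (Real.cos θ : ℂ) • v := by rw [hA, hcos, hww, one_smul]
    have ev : expVal A v = -(Real.sin θ)^2 := by
      unfold expVal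
      rw [hAv, inner_sub_right, inner_smul_right, hcos, hvv, Real.sin_sq]
      norm_cast
      ring
    have ew : expVal A w = (Real.sin θ)^2 := by
      unfold expVal
      rw [hAw, inner_sub_right, inner_smul_right, hcos', hww, Real.sin_sq]
      norm_cast
      ring
    have e : (Real.sin θ * Real.cos θ)^2 = Real.sin θ ^2 - (Real.sin θ ^ 2)^2 := by
      rw [mul_pow, Real.cos_sq']; ring
    have uv : uncert A v = Real.sin θ * Real.cos θ := by
      unfold uncert
      rw [← Real.sqrt_sq (mul_pos hs hc).le, ev, e]
      congr 1
      rw [hAv, map_sub, map_smul, hAv, hAw]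
      simp only [inner_sub_right, inner_smul_right, hcos, hvv]
      norm_cast
      rw [Real.sin_sq]
      ring
    have uw : uncert A w = Real.sin θ * Real.cos θ := by
      unfold uncert
      rw [← Real.sqrt_sq (mul_pos hs hc).le, ew, e]
      congr 1
      rw [hAw, map_sub, map_smul, hAv, hAw]
      simp only [inner_sub_right, inner_smul_right, hcos', hww]
      norm_cast
      rw [Real.sin_sq]
      ring
    refine ⟨A, ?_, ?_, ?_⟩
    · rw [ContinuousLinearMap.isSelfAdjoint_iff_isSymmetric]
      intro x y
      show ⟪A x, y⟫_ℂ = ⟪x, A y⟫_ℂ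
      rw [hA, hA]
      simp only [inner_sub_left, inner_sub_right, inner_smul_left, inner_smul_right,
        inner_conj_symm]
      ring
    · rw [uv, uw]; positivity
    · unfold discern
      rw [uv, uw, ev, ew, Real.tan_eq_sin_div_cos, abs_of_pos (by nlinarith)]
      field_simp
      ring
  · rintro x ⟨A, hA, hpos, rfl⟩
    have hsym := (ContinuousLinearMap.isSelfAdjoint_iff_isSymmetric.mp hA)
    have hvw : ⟪A v, w⟫_ℂ = ⟪v, A w⟫_ℂ := hsym v w
    unfold discern
    rw [div_le_iff₀ hpos, Real.tan_eq_sin_div_cos, div_mul_eq_mul_div, le_div_iff₀ hc,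
      aux_uncert A hA v hv, aux_uncert A hA w hw]
    have b1 := aux_bound_s14 v w (A w - (expVal A w : ℂ) • w) hv hw θ hs hcos (by
      rw [inner_sub_right, inner_smul_right, aux_real A hA, hww]; simp)
    have b2 := aux_bound_s14 w v (A v - (expVal A v : ℂ) • v) hw hv θ hs hcos' (by
      rw [inner_sub_right, inner_smul_right, aux_real A hA, hvv]; simp)
    rw [← inner_conj_symm, RCLike.norm_conj] at b2
    have key : (((expVal A w - expVal A v) * Real.cos θ : ℝ) : ℂ) =
        ⟪A v - (expVal A v : ℂ) • v, w⟫_ℂ - ⟪v, A w - (expVal A w : ℂ) • w⟫_ℂ := by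
      rw [inner_sub_right, inner_sub_left, inner_smul_right, inner_smul_left, hvw, hcos,
        Complex.conj_ofReal]
      push_cast
      ring
    have k2 := congrArg norm key
    rw [Complex.norm_real, Real.norm_eq_abs, abs_mul, abs_of_pos hc] at k2
    rw [k2]
    refine (norm_sub_le _ _).trans ?_
    linarith
end
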